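/- Let p : E → B be an exponentiable arrow in a cartesian category C and let (P, leg, wk, proj, subst) be any polynomial functor for p. Then the endofunctor P is isomorphic to the associated polynomial functor P_p = B_! ∘ p_* ∘ E*; moreover the isomorphism can be taken over B, i.e. compatible with the natural transformations leg of P and of P_p. -/

import Mathlib

open CategoryTheory CategoryTheory.Limits

universe v u

variable {C : Type u} [Category.{v} C]

/-- A *polynomial functor for `p`*: a pullback-preserving endofunctor `P : C ⥤ C` equipped
with a natural transformation `leg_X : P X ⟶ B`, a natural transformation
`wk_X : X × B ⟶ P X` over `B`, an arrow `proj : B ⟶ P E` over `B`, and a natural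
transformation `subst_X : P X ×_B E ⟶ X`, satisfying axioms (P1)–(P4).  Morphisms between
pullbacks (such as `proj ×_B E`, `wk_X ×_B E`, the functorial action of `P(−) ×_B E` on a
morphism, and the pairing used in (P4)) are characterized by their compositions with the two
pullback projections. -/
structure IsPolynomialFor [HasFiniteLimits C] {E B : C} (p : E ⟶ B)
    (P : C ⥤ C) (leg : ∀ X : C, P.obj X ⟶ B) (wk : ∀ X : C, X ⨯ B ⟶ P.obj X)
    (proj : B ⟶ P.obj E) (subst : ∀ X : C, pullback (leg X) p ⟶ X) : Prop where
  /-- `P` preserves pullbacks. -/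
  preserves : PreservesLimitsOfShape WalkingCospan P
  /-- `leg` is a natural transformation `P ⟹ B`. -/
  leg_natural : ∀ (X Y : C) (f : X ⟶ Y), P.map f ≫ leg Y = leg X
  /-- `wk` is a natural transformation `(− × B) ⟹ P`. -/
  wk_natural : ∀ (X Y : C) (f : X ⟶ Y), prod.map f (𝟙 B) ≫ wk Y = wk X ≫ P.map f
  /-- `wk_X : X × B ⟶ P X` is a morphism over `B`. -/
  wk_over : ∀ X : C, wk X ≫ leg X = (prod.snd : X ⨯ B ⟶ B)
  /-- `proj : B ⟶ P E` is a morphism over `B`. -/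
  proj_over : proj ≫ leg E = 𝟙 B
  /-- `subst` is a natural transformation `(P(−) ×_B E) ⟹ 𝟭 C`: for `f : X ⟶ Y`, composing
  the induced morphism `P X ×_B E ⟶ P Y ×_B E` (characterized by the two displayed equations)
  with `subst Y` equals `subst X ≫ f`. -/
  subst_natural : ∀ (X Y : C) (f : X ⟶ Y) (u : pullback (leg X) p ⟶ pullback (leg Y) p),
    u ≫ pullback.fst (leg Y) p = pullback.fst (leg X) p ≫ P.map f →
    u ≫ pullback.snd (leg Y) p = pullback.snd (leg X) p →
    u ≫ subst Y = subst X ≫ f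
  /-- (P1): `P p ∘ proj = wk_B ∘ Δ_B`. -/
  P1 : proj ≫ P.map p = prod.lift (𝟙 B) (𝟙 B) ≫ wk B
  /-- (P2): `subst_E ∘ (proj ×_B E)` is the canonical isomorphism `B ×_B E ≅ E` (the second
  pullback projection), where `proj ×_B E : B ×_B E ⟶ P E ×_B E` is characterized by the two
  displayed equations. -/
  P2 : ∀ u : pullback (𝟙 B) p ⟶ pullback (leg E) p,
    u ≫ pullback.fst (leg E) p = pullback.fst (𝟙 B) p ≫ proj →
    u ≫ pullback.snd (leg E) p = pullback.snd (𝟙 B) p →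
    u ≫ subst E = pullback.snd (𝟙 B) p
  /-- (P3): `subst_X ∘ (wk_X ×_B E)` is the projection `(X × B) ×_B E ≅ X × E ⟶ X`, where
  `wk_X ×_B E : (X × B) ×_B E ⟶ P X ×_B E` is characterized by the displayed equations. -/
  P3 : ∀ (X : C) (u : pullback (prod.snd : X ⨯ B ⟶ B) p ⟶ pullback (leg X) p),
    u ≫ pullback.fst (leg X) p = pullback.fst (prod.snd : X ⨯ B ⟶ B) p ≫ wk X →
    u ≫ pullback.snd (leg X) p = pullback.snd (prod.snd : X ⨯ B ⟶ B) p →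
    u ≫ subst X = pullback.fst (prod.snd : X ⨯ B ⟶ B) p ≫ (prod.fst : X ⨯ B ⟶ X)
  /-- (P4): `P(subst_X) ∘ (wk_{PX} ∘ (id_{PX}, leg_X), proj ∘ leg_X) = id_{PX}`, where the
  pairing `P X ⟶ P (P X ×_B E)` is characterized, via the isomorphism
  `P (P X ×_B E) ≅ P P X ×_{P B} P E` coming from `P` preserving pullbacks, by its composites
  with `P` applied to the two pullback projections. -/
  P4 : ∀ (X : C) (u : P.obj X ⟶ P.obj (pullback (leg X) p)),
    u ≫ P.map (pullback.fst (leg X) p) = prod.lift (𝟙 (P.obj X)) (leg X) ≫ wk (P.obj X) →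
    u ≫ P.map (pullback.snd (leg X) p) = leg X ≫ proj →
    u ≫ P.map (subst X) = 𝟙 (P.obj X)

/-!
Axioms (P1)–(P4) make `P`, regarded as a functor `C ⥤ Over B` through `leg`, right adjoint to
`A ↦ A ×_B E`. The counit is `subst`; the unit at `a : A ⟶ B` is the arrow
`A ⟶ P (A ×_B E) ≅ P A ×_{P B} P E` with components `wk ∘ (id, a)` and `proj ∘ a`, which agree
over `P B` by (P1). One triangle identity is (P4), and (P2) and (P3) are the two components of
the other. Since `p_* ∘ E*` is right adjoint to the same functor `E_! ∘ p*`, uniqueness of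
right adjoints gives the isomorphism over `B`.
-/

section BaseChange

variable [HasPullbacks C] {E B : C} (p : E ⟶ B) {A A₁ A₂ : C} {a : A ⟶ B} {a₁ : A₁ ⟶ B}
    {a₂ : A₂ ⟶ B}

/-- The arrow `f ×_B E : A ×_B E ⟶ A₁ ×_B E` induced by an arrow `f : A ⟶ A₁` over `B`. It is
the underlying arrow of `(Over.pullback p).map f`, for unbundled `f`. -/
noncomputable def baseChange (f : A ⟶ A₁) (hf : f ≫ a₁ = a) : pullback a p ⟶ pullback a₁ p :=
  pullback.lift (pullback.fst a p ≫ f) (pullback.snd a p)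
    (by rw [Category.assoc, hf, pullback.condition])

lemma baseChange_fst (f : A ⟶ A₁) (hf : f ≫ a₁ = a) :
    baseChange p f hf ≫ pullback.fst a₁ p = pullback.fst a p ≫ f :=
  pullback.lift_fst _ _ _

lemma baseChange_snd (f : A ⟶ A₁) (hf : f ≫ a₁ = a) :
    baseChange p f hf ≫ pullback.snd a₁ p = pullback.snd a p :=
  pullback.lift_snd _ _ _

lemma baseChange_comp (f : A ⟶ A₁) (hf : f ≫ a₁ = a) (g : A₁ ⟶ A₂) (hg : g ≫ a₂ = a₁) :
    baseChange p (f ≫ g) (by rw [Category.assoc, hg, hf]) =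
      baseChange p f hf ≫ baseChange p g hg := by
  apply pullback.hom_ext
  · rw [baseChange_fst, Category.assoc, baseChange_fst, reassoc_of% baseChange_fst p f hf]
  · rw [baseChange_snd, Category.assoc, baseChange_snd, baseChange_snd]

end BaseChange

namespace IsPolynomialFor

section Transpose

variable [HasPullbacks C] {E B : C} {p : E ⟶ B} {P : C ⥤ C} {leg : ∀ X : C, P.obj X ⟶ B}
    (subst : ∀ X : C, pullback (leg X) p ⟶ X) {A A₁ X : C} {a : A ⟶ B} {a₁ : A₁ ⟶ B}

/-- The transpose `A ×_B E ⟶ X` of an arrow `g : A ⟶ P X` over `B`, that is, the composite of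
`g ×_B E` with the substitution `P X ×_B E ⟶ X`. -/
noncomputable def transpose (g : A ⟶ P.obj X) (hg : g ≫ leg X = a) : pullback a p ⟶ X :=
  baseChange p g hg ≫ subst X

lemma transpose_precomp (f : A ⟶ A₁) (hf : f ≫ a₁ = a) (g : A₁ ⟶ P.obj X)
    (hg : g ≫ leg X = a₁) :
    transpose subst (f ≫ g) (by rw [Category.assoc, hg, hf]) =
      baseChange p f hf ≫ transpose subst g hg := by
  rw [transpose, baseChange_comp p f hf g hg, Category.assoc, transpose]

end Transpose

variable [HasFiniteLimits C] {E B : C} {p : E ⟶ B}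
    {P : C ⥤ C} {leg : ∀ X : C, P.obj X ⟶ B} {wk : ∀ X : C, X ⨯ B ⟶ P.obj X}
    {proj : B ⟶ P.obj E} {subst : ∀ X : C, pullback (leg X) p ⟶ X}
    (h : IsPolynomialFor p P leg wk proj subst) {A A₁ X Y : C} {a : A ⟶ B} {a₁ : A₁ ⟶ B}

include h

lemma map_comp_leg (g : A ⟶ P.obj X) (hg : g ≫ leg X = a) (f : X ⟶ Y) :
    (g ≫ P.map f) ≫ leg Y = a := by
  rw [Category.assoc, h.leg_natural, hg]

lemma lift_wk_leg (x : A ⟶ X) (a : A ⟶ B) : (prod.lift x a ≫ wk X) ≫ leg X = a := by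
  rw [Category.assoc, h.wk_over, prod.lift_snd]

lemma comp_proj_leg (a : A ⟶ B) : (a ≫ proj) ≫ leg E = a := by
  rw [Category.assoc, h.proj_over, Category.comp_id]

lemma lift_wk_map (x : A ⟶ X) (a : A ⟶ B) (f : X ⟶ Y) :
    prod.lift x a ≫ wk X ≫ P.map f = prod.lift (x ≫ f) a ≫ wk Y := by
  rw [← h.wk_natural, prod.lift_map_assoc, Category.comp_id]

lemma lift_wk_map_eq_proj_map (a : A ⟶ B) :
    (prod.lift (𝟙 A) a ≫ wk A) ≫ P.map a = (a ≫ proj) ≫ P.map p := by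
  rw [Category.assoc, h.lift_wk_map, Category.id_comp, Category.assoc, h.P1,
    prod.comp_lift_assoc, Category.comp_id]

lemma transpose_postcomp (g : A ⟶ P.obj X) (hg : g ≫ leg X = a) (f : X ⟶ Y) :
    transpose subst (g ≫ P.map f) (h.map_comp_leg g hg f) = transpose subst g hg ≫ f := by
  have subst_comp : transpose subst (P.map f) (h.leg_natural X Y f) = subst X ≫ f :=
    h.subst_natural X Y f _ (baseChange_fst p _ _) (baseChange_snd p _ _)
  rw [transpose_precomp subst g hg _ (h.leg_natural X Y f), subst_comp, transpose,
    Category.assoc]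

lemma transpose_lift_wk (x : A ⟶ X) (a : A ⟶ B) :
    transpose subst (prod.lift x a ≫ wk X) (h.lift_wk_leg x a) = pullback.fst a p ≫ x := by
  have transpose_wk : transpose subst (wk X) (h.wk_over X) = pullback.fst prod.snd p ≫ prod.fst :=
    h.P3 X _ (baseChange_fst p _ _) (baseChange_snd p _ _)
  rw [transpose_precomp subst _ (prod.lift_snd x a) _ (h.wk_over X), transpose_wk,
    reassoc_of% baseChange_fst p _ (prod.lift_snd x a), prod.lift_fst]

lemma transpose_comp_proj (a : A ⟶ B) :
    transpose subst (a ≫ proj) (h.comp_proj_leg a) = pullback.snd a p := by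
  have transpose_proj : transpose subst proj h.proj_over = pullback.snd (𝟙 B) p :=
    h.P2 _ (baseChange_fst p _ _) (baseChange_snd p _ _)
  rw [transpose_precomp subst a (Category.comp_id a) _ h.proj_over, transpose_proj,
    baseChange_snd]

lemma isPullback_map (a : A ⟶ B) :
    IsPullback (P.map (pullback.fst a p)) (P.map (pullback.snd a p)) (P.map a) (P.map p) :=
  have := h.preserves
  (IsPullback.of_hasPullback a p).map P

/-- The arrow `A ⟶ P (A ×_B E)` whose components in `P A ×_{P B} P E` are `wk ∘ (id, a)` and
`proj ∘ a`; it is the unit of the adjunction between `A ↦ A ×_B E` and `P`. -/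
noncomputable def unit (a : A ⟶ B) : A ⟶ P.obj (pullback a p) :=
  (h.isPullback_map a).lift _ _ (h.lift_wk_map_eq_proj_map a)

lemma unit_map_fst (a : A ⟶ B) :
    h.unit a ≫ P.map (pullback.fst a p) = prod.lift (𝟙 A) a ≫ wk A :=
  (h.isPullback_map a).lift_fst _ _ _

lemma unit_map_snd (a : A ⟶ B) : h.unit a ≫ P.map (pullback.snd a p) = a ≫ proj :=
  (h.isPullback_map a).lift_snd _ _ _

lemma unit_leg (a : A ⟶ B) : h.unit a ≫ leg (pullback a p) = a := by
  rw [← h.leg_natural _ _ (pullback.fst a p), reassoc_of% h.unit_map_fst a, ← Category.assoc,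
    h.lift_wk_leg]

lemma unit_naturality (f : A ⟶ A₁) (hf : f ≫ a₁ = a) :
    f ≫ h.unit a₁ = h.unit a ≫ P.map (baseChange p f hf) := by
  apply (h.isPullback_map a₁).hom_ext
  · calc (f ≫ h.unit a₁) ≫ P.map (pullback.fst a₁ p)
        = prod.lift f a ≫ wk A₁ := by
          rw [Category.assoc, unit_map_fst, prod.comp_lift_assoc, Category.comp_id, hf]
      _ = h.unit a ≫ P.map (pullback.fst a p ≫ f) := by
          rw [P.map_comp, reassoc_of% h.unit_map_fst a, h.lift_wk_map, Category.id_comp]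
      _ = (h.unit a ≫ P.map (baseChange p f hf)) ≫ P.map (pullback.fst a₁ p) := by
          rw [Category.assoc, ← P.map_comp, baseChange_fst]
  · calc (f ≫ h.unit a₁) ≫ P.map (pullback.snd a₁ p)
        = a ≫ proj := by rw [Category.assoc, unit_map_snd, reassoc_of% hf]
      _ = (h.unit a ≫ P.map (baseChange p f hf)) ≫ P.map (pullback.snd a₁ p) := by
          rw [Category.assoc, ← P.map_comp, baseChange_snd, unit_map_snd]

lemma transpose_unit (a : A ⟶ B) :
    transpose subst (h.unit a) (h.unit_leg a) = 𝟙 (pullback a p) := by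
  apply pullback.hom_ext
  · simp only [← h.transpose_postcomp, h.unit_map_fst, h.transpose_lift_wk, Category.comp_id,
      Category.id_comp]
  · simp only [← h.transpose_postcomp, h.unit_map_snd, h.transpose_comp_proj, Category.id_comp]

lemma unit_map_subst (X : C) : h.unit (leg X) ≫ P.map (subst X) = 𝟙 (P.obj X) :=
  h.P4 X _ (h.unit_map_fst (leg X)) (h.unit_map_snd (leg X))

lemma unit_map_transpose (g : A ⟶ P.obj X) (hg : g ≫ leg X = a) :
    h.unit a ≫ P.map (transpose subst g hg) = g := by
  rw [transpose, P.map_comp, ← reassoc_of% h.unit_naturality g hg, unit_map_subst,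
    Category.comp_id]

lemma transpose_unit_map (f : pullback a p ⟶ X) :
    transpose subst (h.unit a ≫ P.map f) (h.map_comp_leg _ (h.unit_leg a) f) = f := by
  rw [h.transpose_postcomp _ (h.unit_leg a), transpose_unit, Category.id_comp]

/-- The functor `P`, viewed as taking values in `Over B` by means of `leg`. -/
def toOver : C ⥤ Over B :=
  P.toOver B leg (h.leg_natural _ _)

/-- The adjunction exhibiting `P : C ⥤ Over B` as right adjoint to `A ↦ A ×_B E`. -/
noncomputable def adjunction : Over.pullback p ⋙ Over.forget E ⊣ h.toOver :=
  Adjunction.mkOfHomEquiv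
    { homEquiv A _ :=
        { toFun f := Over.homMk (h.unit A.hom ≫ P.map f) (h.map_comp_leg _ (h.unit_leg A.hom) f)
          invFun g := transpose subst g.left (Over.w g)
          left_inv f := h.transpose_unit_map f
          right_inv g := Over.OverMorphism.ext (h.unit_map_transpose g.left (Over.w g)) }
      homEquiv_naturality_left_symm f g :=
        transpose_precomp subst f.left (Over.w f) g.left (Over.w g)
      homEquiv_naturality_right {A _ _} f g := Over.OverMorphism.ext <|
        (congrArg (h.unit A.hom ≫ ·) (P.map_comp f g)).trans (Category.assoc _ _ _).symm }

end IsPolynomialFor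

/-- Let `p : E ⟶ B` be an exponentiable arrow in a cartesian category `C`
(witnessed by a pushforward `p_*` with `p* ⊣ p_*`), and let `(P, leg, wk, proj, subst)` be any
polynomial functor for `p`.  Then `P` is isomorphic to the associated polynomial functor
`P_p = B_! ∘ p_* ∘ E*`, and the isomorphism can be taken over `B`, i.e. compatible with the
natural transformation `leg` of `P` and the structure arrows of `P_p` (its `leg`). -/
theorem polynomialFunctor_iso_assocPoly
    {C : Type u} [Category.{v} C] [HasFiniteLimits C] {E B : C} (p : E ⟶ B)
    (pstar : Over E ⥤ Over B) (adj : Over.pullback p ⊣ pstar)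
    (P : C ⥤ C) (leg : ∀ X : C, P.obj X ⟶ B) (wk : ∀ X : C, X ⨯ B ⟶ P.obj X)
    (proj : B ⟶ P.obj E) (subst : ∀ X : C, pullback (leg X) p ⟶ X)
    (h : IsPolynomialFor p P leg wk proj subst) :
    ∃ i : P ≅ Over.star E ⋙ pstar ⋙ Over.forget B,
      ∀ X : C, i.hom.app X ≫ ((Over.star E ⋙ pstar).obj X).hom = leg X := by
  let e : h.toOver ≅ Over.star E ⋙ pstar :=
    h.adjunction.rightAdjointUniq (adj.comp (Over.forgetAdjStar E))
  exact ⟨Functor.isoWhiskerRight e (Over.forget B), fun X => Over.w (e.hom.app X)⟩
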